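/- For every coalition C ⊆ AG and all formulas φ, ψ ∈ Φ, the formula (⟨∅⟩φ ∧ ⟨C⟩ψ) → ⟨C⟩(φ∧ψ) (Special independence of agents, A-SIA) is derivable in MCL. -/

import Mathlib

namespace CL

/-- The language Φ of coalition logic over a set of agents, with atomic
propositions drawn from ℕ (a countable set). -/
inductive Formula (Agent : Type) : Type
  | top : Formula Agent
  | atom : ℕ → Formula Agent
  | neg : Formula Agent → Formula Agent
  | and : Formula Agent → Formula Agent → Formula Agent
  | coal : Set Agent → Formula Agent → Formula Agent

namespace Formula

variable {Agent : Type}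

def bot : Formula Agent := neg top

def or (φ ψ : Formula Agent) : Formula Agent := neg (and (neg φ) (neg ψ))

def imp (φ ψ : Formula Agent) : Formula Agent := or (neg φ) ψ

def iff (φ ψ : Formula Agent) : Formula Agent := and (imp φ ψ) (imp ψ φ)

end Formula

/-- The three frame properties: seriality, independence of agents, determinism.
`ES` is represented by `Set P3`, the eight subsets of {S, I, D}. -/
inductive P3 : Type
  | S | I | D
deriving DecidableEq
/-- Propositional evaluation of a formula, treating coalition formulas and
atoms as propositional atoms (valued by `v`). -/
def Formula.evalProp {Agent : Type} (v : Formula Agent → Bool) : Formula Agent → Bool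
  | .top => true
  | .atom n => v (.atom n)
  | .neg φ => !(φ.evalProp v)
  | .and φ ψ => φ.evalProp v && ψ.evalProp v
  | .coal C φ => v (.coal C φ)

/-- A propositional tautology. -/
def Tautology {Agent : Type} (φ : Formula Agent) : Prop :=
  ∀ v : Formula Agent → Bool, φ.evalProp v = true

/-- Derivability in the axiomatic system XL, for X ∈ ES (X : Set P3).
MCL is the case X = ∅ and CL is the case X = {S, I, D}. -/
inductive Deriv {Agent : Type} (X : Set P3) : Formula Agent → Prop
  | taut {φ : Formula Agent} : Tautology φ → Deriv X φ
  | naaa (C : Set Agent) : Deriv X (Formula.neg (Formula.coal C Formula.bot))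
  | mg (C : Set Agent) (φ ψ : Formula Agent) :
      Deriv X ((Formula.coal ∅ (φ.imp ψ)).imp ((Formula.coal C φ).imp (Formula.coal C ψ)))
  | mc {C D : Set Agent} (h : C ⊆ D) (φ : Formula Agent) :
      Deriv X ((Formula.coal C φ).imp (Formula.coal D φ))
  | ser (h : P3.S ∈ X) (C : Set Agent) : Deriv X (Formula.coal C Formula.top)
  | ia (h : P3.I ∈ X) {C D : Set Agent} (hCD : C ∩ D = ∅) (φ ψ : Formula Agent) :
      Deriv X (((Formula.coal C φ).and (Formula.coal D ψ)).imp
        (Formula.coal (C ∪ D) (φ.and ψ)))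
  | det (h : P3.D ∈ X) (C : Set Agent) (φ ψ : Formula Agent) :
      Deriv X ((Formula.coal C (φ.or ψ)).imp
        ((Formula.coal C φ).or (Formula.coal Set.univ ψ)))
  | mp {φ ψ : Formula Agent} : Deriv X (φ.imp ψ) → Deriv X φ → Deriv X ψ
  | cn {φ : Formula Agent} (C : Set Agent) (ψ : Formula Agent) :
      Deriv X φ → Deriv X ((Formula.coal C ψ).imp (Formula.coal ∅ φ))

/-- A-SIA: (⟨∅⟩φ ∧ ⟨C⟩ψ) → ⟨C⟩(φ∧ψ) is derivable in MCL (the system XL with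
X = ∅). -/
theorem sia_derivable {Agent : Type} [Fintype Agent] (C : Set Agent)
    (φ ψ : Formula Agent) :
    Deriv (∅ : Set P3)
      (((Formula.coal ∅ φ).and (Formula.coal C ψ)).imp
        (Formula.coal C (φ.and ψ))) := by
  -- Necessitating `φ → (ψ → φ ∧ ψ)` is conditional on some coalition formula; `⟨C⟩ψ` serves.
  have h₁ : Deriv (∅ : Set P3) ((Formula.coal C ψ).imp
      (Formula.coal ∅ (φ.imp (ψ.imp (φ.and ψ))))) := by
    refine Deriv.cn C ψ (Deriv.taut fun v => ?_)
    simp only [Formula.imp, Formula.or, Formula.evalProp]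
    cases φ.evalProp v <;> cases ψ.evalProp v <;> rfl
  -- Monotonicity at `∅` and then at `C` turns it into `⟨∅⟩φ → ⟨C⟩ψ → ⟨C⟩(φ ∧ ψ)`.
  have h₂ := Deriv.mg (X := ∅) ∅ φ (ψ.imp (φ.and ψ))
  have h₃ := Deriv.mg (X := ∅) C ψ (φ.and ψ)
  refine Deriv.mp (Deriv.mp (Deriv.mp (Deriv.taut fun v => ?_) h₁) h₂) h₃
  simp only [Formula.imp, Formula.or, Formula.evalProp]
  generalize v (Formula.coal ∅ φ) = a
  generalize v (Formula.coal C ψ) = b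
  generalize v (Formula.coal C (φ.and ψ)) = g
  generalize v (Formula.coal ∅ _) = d
  generalize v (Formula.coal ∅ _) = e
  revert a b g d e
  decide

end CL
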